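/- Let R be a commutative ring and q, x : ℤ → R. For all i ∈ ℤ and all n ≥ 1, the tridiagonal determinants satisfy the condensation identity D_{i,n}(q,x) · D_{i+1,n}(q,x) = D_{i,n+1}(q,x) · D_{i+1,n-1}(q,x) + ∏_{k=1}^{n} q_{i+k}. (When all q_i are specialized at 1 this recovers Dodgson's determinant evaluation rule for such tridiagonal matrices.) -/

import Mathlib

/-- The `n × n` tridiagonal matrix whose diagonal entries, from top-left to bottom-right,
are `x (i+n-1), x (i+n-2), …, x i`, whose superdiagonal entries are all `1`, and whose
subdiagonal entries, from top to bottom, are `q (i+n-1), …, q (i+1)`. -/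
def triMat {R : Type*} [CommRing R] (q x : ℤ → R) (i : ℤ) (n : ℕ) :
    Matrix (Fin n) (Fin n) R :=
  Matrix.of fun j k =>
    if (j : ℕ) = (k : ℕ) then x (i + (n : ℤ) - 1 - (j : ℕ))
    else if (j : ℕ) + 1 = (k : ℕ) then 1
    else if (k : ℕ) + 1 = (j : ℕ) then q (i + (n : ℤ) - 1 - (k : ℕ))
    else 0

/-- The tridiagonal determinant `D_{i,n}(q,x)`; by convention `D_{i,0}(q,x) = 1`. -/
def triDet {R : Type*} [CommRing R] (q x : ℤ → R) (i : ℤ) (n : ℕ) : R :=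
  (triMat q x i n).det

/-- Expansion along the first row. -/
theorem triDet_rec {R : Type*} [CommRing R] (q x : ℤ → R) (i : ℤ) (n : ℕ) :
    triDet q x i (n + 2) =
      x (i + n + 1) * triDet q x i (n + 1) - q (i + n + 1) * triDet q x i n := by
  have h1 : (triMat q x i (n + 2)).submatrix Fin.succ (Fin.succAbove 0) =
      triMat q x i (n + 1) := by
    ext j k
    simp only [triMat, Matrix.submatrix_apply, Matrix.of_apply, Fin.succAbove_zero,
      Fin.val_succ, add_left_inj]
    push_cast
    have e : ∀ m : ℤ, i + ((n : ℤ) + 2) - 1 - (m + 1) = i + ((n : ℤ) + 1) - 1 - m := by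
      intro m; ring
    simp only [e]
  have h2 : ((triMat q x i (n + 2)).submatrix Fin.succ (Fin.succAbove 1)).det =
      q (i + n + 1) * triDet q x i n := by
    rw [Matrix.det_succ_column_zero, Fin.sum_univ_succ, Finset.sum_eq_zero, add_zero]
    · have h3 : ((triMat q x i (n + 2)).submatrix Fin.succ (Fin.succAbove 1)).submatrix
          (Fin.succAbove 0) Fin.succ = triMat q x i n := by
        ext j k
        have hk : (((1 : Fin (n + 2)).succAbove k.succ : Fin (n + 2)) : ℕ) = k + 2 := by
          rw [← Fin.succ_zero_eq_one, Fin.succ_succAbove_succ]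
          simp
        simp only [triMat, Matrix.submatrix_apply, Matrix.of_apply, Fin.succAbove_zero,
          Fin.val_succ, hk]
        push_cast
        have e : ∀ m : ℤ, i + ((n : ℤ) + 2) - 1 - (m + 2) = i + (n : ℤ) - 1 - m := by
          intro m; ring
        have e' : ∀ m : ℤ, i + ((n : ℤ) + 2) - 1 - (m + 1 + 1) = i + (n : ℤ) - 1 - m := by
          intro m; ring
        have c0 : ((j : ℕ) + 1 + 1 = k + 2) ↔ ((j : ℕ) = k) := by omega
        have c1 : ((j : ℕ) + 1 + 1 + 1 = k + 2) ↔ ((j : ℕ) + 1 = k) := by omega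
        have c2 : ((k : ℕ) + 2 + 1 = j + 1 + 1) ↔ ((k : ℕ) + 1 = j) := by omega
        simp only [c0, c1, c2, e, e']
      rw [h3]
      have e : i + ((n : ℤ) + 2) - 1 = i + n + 1 := by ring
      simp [triMat, triDet, e]
    · intro j _
      simp [triMat]
  unfold triDet at *
  rw [Matrix.det_succ_row_zero, Fin.sum_univ_succ, Fin.sum_univ_succ, Finset.sum_eq_zero,
    add_zero, h1, Fin.succ_zero_eq_one, h2]
  · have e : i + ((n : ℤ) + 2) - 1 = i + n + 1 := by ring
    simp [triMat, e]
    ring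
  · intro j _
    simp [triMat]

theorem triDet_condensation_aux {R : Type*} [CommRing R] (q x : ℤ → R) (i : ℤ) (n : ℕ) :
    triDet q x i (n + 1) * triDet q x (i + 1) (n + 1) =
      triDet q x i (n + 2) * triDet q x (i + 1) n +
        ∏ k ∈ Finset.Icc 1 (n + 1), q (i + (k : ℕ)) := by
  induction n with
  | zero =>
    rw [triDet_rec]
    simp [triDet, triMat]
    ring
  | succ n ih =>
    rw [Finset.prod_Icc_succ_top (by omega)]
    have ha := triDet_rec q x i (n + 1)
    have hb := triDet_rec q x (i + 1) n
    have e1 : i + ((n + 1 : ℕ) : ℤ) + 1 = i + ((n + 1 + 1 : ℕ) : ℤ) := by push_cast; ring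
    have e2 : i + 1 + (n : ℤ) + 1 = i + ((n + 1 + 1 : ℕ) : ℤ) := by push_cast; ring
    rw [e1] at ha
    rw [e2] at hb
    rw [ha, hb]
    linear_combination q (i + ((n + 1 + 1 : ℕ) : ℤ)) * ih

/-- The condensation identity
`D_{i,n} · D_{i+1,n} = D_{i,n+1} · D_{i+1,n-1} + ∏_{k=1}^{n} q_{i+k}`. -/
theorem triDet_condensation {R : Type*} [CommRing R] (q x : ℤ → R)
    (i : ℤ) (n : ℕ) (hn : 1 ≤ n) :
    triDet q x i n * triDet q x (i + 1) n =
      triDet q x i (n + 1) * triDet q x (i + 1) (n - 1) +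
        ∏ k ∈ Finset.Icc 1 n, q (i + (k : ℕ)) := by
  obtain ⟨m, rfl⟩ : ∃ m, n = m + 1 := ⟨n - 1, by omega⟩
  exact triDet_condensation_aux q x i m
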